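/- arXiv:gr-qc/9805081 — 5 statements merged into one kernel-verified Lean document; each statement's English description precedes it below -/
import Mathlib

section
/- Let n ≥ 1, let ξ : ℝ × ℝⁿ × ℝⁿ → ℝⁿ be continuous, and let K : (ℝ × ℝⁿ) × (ℝ × ℝⁿ) → ℝ^{(1+n)×(1+n)} be a family of matrices (indexed by μ, λ ∈ {0,1,…,n}) such that (i) K⁰_λ(x,v) = 0 for all λ, x, v, and (ii) ξⁱ(t, x, w) = Kⁱ₀((t,x),(1,w)) + Σ_{j=1}^{n} wʲ Kⁱⱼ((t,x),(1,w)) for all t ∈ ℝ, x, w ∈ ℝⁿ and all i ∈ {1,…,n}. Then: (a) any C² curve γ = (γ⁰, γ⃗) : ℝ → ℝ × ℝⁿ satisfying the geodesic equation γ̈^μ(t) = Σ_λ K^μ_λ(γ(t), γ̇(t)) γ̇^λ(t) with γ̇⁰(0) = 1 has γ⁰(t) = γ⁰(0) + t and γ̇⁰(t) = 1 for all t; (b) a C² curve γ with γ⁰(t) = t satisfies the geodesic equation if and only if its spatial part satisfies the second-order dynamic equation d²γ⃗ⁱ/dt² = ξⁱ(t, γ⃗(t), dγ⃗/dt(t))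 for all t and all i. Moreover, such a K always exists (e.g. Kⁱ₀((t,x),v) = ξⁱ(t,x,(v¹,…,vⁿ)) and Kⁱⱼ = 0). -/
/-!
The top row of `K` vanishes, so a geodesic has `γ̈⁰ = 0` and its temporal component is affine in the
parameter. Conversely, along a curve with `γ⁰(t) = t` the velocity has temporal component `1`, and
on such velocities the right-hand side `K^μ_λ γ̇^λ` of the geodesic equation is exactly
`(0, ξ)`. Putting `ξ` in the column of `K` multiplied by `γ̇⁰ = 1` gives one such connection.
-/

open scoped Matrix

theorem eq_add_smul_of_deriv_eq_const {𝕜 E : Type*} [RCLike 𝕜] [NormedAddCommGroup E]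
    [NormedSpace 𝕜 E] {f : 𝕜 → E} {c : E} (hf : Differentiable 𝕜 f) (hf' : ∀ t, deriv f t = c)
    (a t : 𝕜) : f t = f a + (t - a) • c := by
  have hder (s : 𝕜) : HasDerivAt (fun s => f s - (s - a) • c) 0 s := by
    simpa [hf' s] using
      (hf s).hasDerivAt.fun_sub (((hasDerivAt_id' s).sub_const a).smul_const c)
  have hconst : f t - (t - a) • c = f a - (a - a) • c :=
    is_const_of_deriv_eq_zero (fun s => (hder s).differentiableAt) (fun s => (hder s).deriv) t a
  simpa [sub_eq_iff_eq_add] using hconst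

theorem mulVec_apply_eq_zero_of_row_eq_zero {R m n : Type*} [NonUnitalNonAssocSemiring R]
    [Fintype n] {A : Matrix m n R} {i : m} (hA : ∀ j, A i j = 0) (v : n → R) : (A *ᵥ v) i = 0 := by
  simp [Matrix.mulVec, dotProduct, hA]

section SecondOrder

variable {𝕜 ι : Type*} [NontriviallyNormedField 𝕜] {F : 𝕜 → (ι → 𝕜) → (ι → 𝕜) → ι → 𝕜}
  {γ : 𝕜 → ι → 𝕜}

/-- `γ` is a solution of the system of second-order equations `γ̈ = F(t, γ, γ̇)`. Derivatives are
taken component by component; the two differentiability fields ensure that none of them is the junk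
value `0`. -/
structure IsSecondOrderSolution (F : 𝕜 → (ι → 𝕜) → (ι → 𝕜) → ι → 𝕜) (γ : 𝕜 → ι → 𝕜) : Prop where
  differentiable (i : ι) : Differentiable 𝕜 fun t => γ t i
  differentiable_deriv (i : ι) : Differentiable 𝕜 (deriv fun t => γ t i)
  deriv_deriv_eq (t : 𝕜) (i : ι) :
    deriv (deriv fun s => γ s i) t = F t (γ t) (fun j => deriv (fun s => γ s j) t) i

theorem isSecondOrderSolution_iff_of_contDiff (hγ : ∀ i, ContDiff 𝕜 2 fun t => γ t i) :
    IsSecondOrderSolution F γ ↔ ∀ t i,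
      deriv (deriv fun s => γ s i) t = F t (γ t) (fun j => deriv (fun s => γ s j) t) i :=
  ⟨fun h => h.deriv_deriv_eq, fun h =>
    ⟨fun i => (hγ i).differentiable two_ne_zero, fun i => (hγ i).differentiable_deriv_two, h⟩⟩

end SecondOrder

section Connection

variable {𝕜 : Type*} {n : ℕ}

/-- The components `K x v μ l` of a connection on the tangent bundle of `𝕜 × 𝕜ⁿ`, as matrices
depending on a base point `x` and a tangent vector `v`; index `0` is temporal. -/
abbrev TangentConnection (𝕜 : Type*) (n : ℕ) : Type _ :=
  (Fin (n + 1) → 𝕜) → (Fin (n + 1) → 𝕜) → Matrix (Fin (n + 1)) (Fin (n + 1)) 𝕜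

namespace TangentConnection

/-- Compatibility of a connection with a dynamic equation `ẍ = ξ(t, x, ẋ)`: on velocities with
temporal component `1`, the spatial part of `K^μ_λ v^λ` is `ξ`. -/
def Reproduces [Semiring 𝕜] (K : TangentConnection 𝕜 n)
    (ξ : 𝕜 → (Fin n → 𝕜) → (Fin n → 𝕜) → Fin n → 𝕜) : Prop :=
  ∀ t x w i, ξ t x w i = K (Fin.cons t x) (Fin.cons 1 w) i.succ 0 +
    ∑ j, w j * K (Fin.cons t x) (Fin.cons 1 w) i.succ j.succ

/-- The connection whose only nonzero components are `Kⁱ₀ = ξⁱ`, realising the dynamic equation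
`ẍ = ξ(t, x, ẋ)` as a geodesic equation. -/
def ofDynamicEq [Zero 𝕜] (ξ : 𝕜 → (Fin n → 𝕜) → (Fin n → 𝕜) → Fin n → 𝕜) :
    TangentConnection 𝕜 n :=
  fun x v => Matrix.of (Fin.cons 0 fun i => Pi.single 0 (ξ (x 0) (Fin.tail x) (Fin.tail v) i))

theorem ofDynamicEq_temporal_eq_zero [Zero 𝕜] (ξ : 𝕜 → (Fin n → 𝕜) → (Fin n → 𝕜) → Fin n → 𝕜)
    (x v : Fin (n + 1) → 𝕜) (l : Fin (n + 1)) : ofDynamicEq ξ x v 0 l = 0 :=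
  rfl

theorem reproduces_ofDynamicEq [Semiring 𝕜] (ξ : 𝕜 → (Fin n → 𝕜) → (Fin n → 𝕜) → Fin n → 𝕜) :
    (ofDynamicEq ξ).Reproduces ξ := by
  intro t x w i
  simp [ofDynamicEq]

theorem Reproduces.mulVec_succ [CommSemiring 𝕜] {K : TangentConnection 𝕜 n}
    {ξ : 𝕜 → (Fin n → 𝕜) → (Fin n → 𝕜) → Fin n → 𝕜} (hK : K.Reproduces ξ)
    (x : Fin (n + 1) → 𝕜) {v : Fin (n + 1) → 𝕜} (hv : v 0 = 1) (i : Fin n) :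
    (K x v *ᵥ v) i.succ = ξ (x 0) (Fin.tail x) (Fin.tail v) i := by
  rw [hK, Fin.cons_self_tail, ← hv, Fin.cons_self_tail]
  simp [Matrix.mulVec, dotProduct, Fin.sum_univ_succ, hv, Fin.tail, mul_comm]

/-- Geodesics of `K`: the twice differentiable solutions of `γ̈^μ = ∑ λ, K^μ_λ(γ, γ̇) γ̇^λ`. -/
def IsGeodesic [NontriviallyNormedField 𝕜] (K : TangentConnection 𝕜 n)
    (γ : 𝕜 → Fin (n + 1) → 𝕜) : Prop :=
  IsSecondOrderSolution (fun _ x v => K x v *ᵥ v) γ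

theorem IsGeodesic.temporal_eq_add_mul_and_deriv_eq [RCLike 𝕜] {K : TangentConnection 𝕜 n}
    {γ : 𝕜 → Fin (n + 1) → 𝕜} (hγ : K.IsGeodesic γ) (hK : ∀ x v l, K x v 0 l = 0) (t : 𝕜) :
    γ t 0 = γ 0 0 + t * deriv (fun s => γ s 0) 0 ∧
      deriv (fun s => γ s 0) t = deriv (fun s => γ s 0) 0 := by
  have hacc (s : 𝕜) : deriv (deriv fun s => γ s 0) s = 0 :=
    (hγ.deriv_deriv_eq s 0).trans (mulVec_apply_eq_zero_of_row_eq_zero (hK _ _) _)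
  have hvel (s : 𝕜) : deriv (fun s => γ s 0) s = deriv (fun s => γ s 0) 0 :=
    is_const_of_deriv_eq_zero (hγ.differentiable_deriv 0) hacc s 0
  exact ⟨by simpa using eq_add_smul_of_deriv_eq_const (hγ.differentiable 0) hvel 0 t, hvel t⟩

theorem Reproduces.isGeodesic_iff [NontriviallyNormedField 𝕜] {K : TangentConnection 𝕜 n}
    {ξ : 𝕜 → (Fin n → 𝕜) → (Fin n → 𝕜) → Fin n → 𝕜} (hKξ : K.Reproduces ξ)
    (hK : ∀ x v l, K x v 0 l = 0) {γ : 𝕜 → Fin (n + 1) → 𝕜} (hγ : ∀ t, γ t 0 = t) :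
    K.IsGeodesic γ ↔ IsSecondOrderSolution ξ fun t => Fin.tail (γ t) := by
  have htime : (fun s => γ s 0) = id := funext hγ
  have hvel : (deriv fun s => γ s 0) = fun _ => 1 := by rw [htime, deriv_id']
  have hspatial (t : 𝕜) (i : Fin n) :
      (K (γ t) (fun l => deriv (fun s => γ s l) t) *ᵥ fun l => deriv (fun s => γ s l) t) i.succ =
        ξ t (Fin.tail (γ t)) (fun j => deriv (fun s => γ s j.succ) t) i := by
    rw [hKξ.mulVec_succ _ (congrFun hvel t), hγ]
    rfl
  constructor
  · intro h
    exact ⟨fun i => h.differentiable i.succ, fun i => h.differentiable_deriv i.succ,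
      fun t i => (h.deriv_deriv_eq t i.succ).trans (hspatial t i)⟩
  · intro h
    refine ⟨Fin.cases ?_ h.differentiable, Fin.cases ?_ h.differentiable_deriv,
      fun t => Fin.cases ?_ fun i => (h.deriv_deriv_eq t i).trans (hspatial t i).symm⟩
    · exact htime ▸ differentiable_id
    · exact hvel ▸ differentiable_const 1
    · rw [hvel, deriv_const, mulVec_apply_eq_zero_of_row_eq_zero (hK _ _)]

end TangentConnection

end Connection

open TangentConnection in
theorem nonrelativistic_dynamic_eq_as_geodesic_eq_general {𝕜 : Type*} [RCLike 𝕜] {n : ℕ}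
    (ξ : 𝕜 → (Fin n → 𝕜) → (Fin n → 𝕜) → Fin n → 𝕜) :
    (∀ K : TangentConnection 𝕜 n, (∀ x v l, K x v 0 l = 0) →
      (∀ γ, K.IsGeodesic γ → ∀ t, γ t 0 = γ 0 0 + t * deriv (fun s => γ s 0) 0 ∧
        deriv (fun s => γ s 0) t = deriv (fun s => γ s 0) 0) ∧
      (K.Reproduces ξ → ∀ γ : 𝕜 → Fin (n + 1) → 𝕜, (∀ t, γ t 0 = t) →
        (K.IsGeodesic γ ↔ IsSecondOrderSolution ξ fun t => Fin.tail (γ t)))) ∧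
    ∃ K : TangentConnection 𝕜 n, (∀ x v l, K x v 0 l = 0) ∧ K.Reproduces ξ :=
  ⟨fun _ hK => ⟨fun _ hγ => hγ.temporal_eq_add_mul_and_deriv_eq hK,
    fun hKξ _ hγ => hKξ.isGeodesic_iff hK hγ⟩,
    ofDynamicEq ξ, ofDynamicEq_temporal_eq_zero ξ, reproduces_ofDynamicEq ξ⟩

/-- Any second order dynamic equation `x¨ⁱ = ξⁱ(t,x,ẋ)` of non-relativistic
mechanics is equivalent to a geodesic equation for a connection `K` on the tangent bundle
of `ℝ × ℝⁿ` with vanishing temporal components, and such a connection always exists. -/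
theorem nonrelativistic_dynamic_eq_as_geodesic_eq (n : ℕ) (hn : 1 ≤ n)
    (ξ : ℝ → (Fin n → ℝ) → (Fin n → ℝ) → Fin n → ℝ)
    (hξ : Continuous fun p : ℝ × (Fin n → ℝ) × (Fin n → ℝ) => ξ p.1 p.2.1 p.2.2) :
    (∀ K : (Fin (n+1) → ℝ) → (Fin (n+1) → ℝ) → Fin (n+1) → Fin (n+1) → ℝ,
      -- (i) vanishing temporal components
      (∀ x v l, K x v 0 l = 0) →
      -- (ii) K reproduces ξ on the subbundle of non-relativistic velocities
      (∀ (t : ℝ) (x w : Fin n → ℝ) (i : Fin n),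
        ξ t x w i
          = K (Fin.cons t x) (Fin.cons 1 w) i.succ 0
            + ∑ j : Fin n, w j * K (Fin.cons t x) (Fin.cons 1 w) i.succ j.succ) →
      -- (a) temporal behaviour of geodesics
      ((∀ γ : ℝ → Fin (n+1) → ℝ, (∀ mu, ContDiff ℝ 2 fun t => γ t mu) →
          (∀ (t : ℝ) (mu : Fin (n+1)), deriv (deriv fun s => γ s mu) t
            = ∑ l : Fin (n+1),
                K (γ t) (fun nu => deriv (fun s => γ s nu) t) mu l
                  * deriv (fun s => γ s l) t) →
          deriv (fun s => γ s 0) 0 = 1 →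
          ∀ t : ℝ, γ t 0 = γ 0 0 + t ∧ deriv (fun s => γ s 0) t = 1)
      -- (b) geodesic equation ↔ dynamic equation
        ∧ (∀ γ : ℝ → Fin (n+1) → ℝ, (∀ mu, ContDiff ℝ 2 fun t => γ t mu) →
          (∀ t : ℝ, γ t 0 = t) →
          ((∀ (t : ℝ) (mu : Fin (n+1)), deriv (deriv fun s => γ s mu) t
              = ∑ l : Fin (n+1),
                  K (γ t) (fun nu => deriv (fun s => γ s nu) t) mu l
                    * deriv (fun s => γ s l) t)
            ↔ (∀ (t : ℝ) (i : Fin n), deriv (deriv fun s => γ s i.succ) t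
                = ξ t (fun j => γ t j.succ)
                    (fun j => deriv (fun s => γ s j.succ) t) i)))))
    -- Moreover, such a connection K always exists
    ∧ (∃ K : (Fin (n+1) → ℝ) → (Fin (n+1) → ℝ) → Fin (n+1) → Fin (n+1) → ℝ,
        (∀ x v l, K x v 0 l = 0) ∧
        (∀ (t : ℝ) (x w : Fin n → ℝ) (i : Fin n),
          ξ t x w i
            = K (Fin.cons t x) (Fin.cons 1 w) i.succ 0
              + ∑ j : Fin n, w j * K (Fin.cons t x) (Fin.cons 1 w) i.succ j.succ)) := by
  obtain ⟨hgen, hex⟩ := nonrelativistic_dynamic_eq_as_geodesic_eq_general ξ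
  refine ⟨fun K hK hKξ => ⟨fun γ hγ hgeo h1 t => ?_, fun γ hγ ht => ?_⟩, hex⟩
  · simpa only [h1, mul_one] using
      (hgen K hK).1 γ ((isSecondOrderSolution_iff_of_contDiff hγ).2 hgeo) t
  · exact (isSecondOrderSolution_iff_of_contDiff hγ).symm.trans <|
      ((hgen K hK).2 hKξ γ ht).trans <|
        isSecondOrderSolution_iff_of_contDiff fun i => hγ i.succ
end

section
/- Let n ≥ 1 and let hⁱ_λ : ℝ × ℝⁿ → ℝ (i ∈ {1,…,n}, λ ∈ {0,1,…,n}) be arbitrary functions. Define the soldering form σ on the tangent bundle of ℝ × ℝⁿ by σ⁰_λ(x,v) = 0, σⁱₖ(x,v) = hⁱₖ(x) − ½ hⁱₖ(x) v⁰, and σⁱ₀(x,v) = −½ Σ_k hⁱₖ(x) vᵏ − hⁱ₀(x) v⁰ + hⁱ₀(x). Then for every x and every v ∈ ℝ × ℝⁿ with v⁰ = 1, Σ_λ σ^μ_λ(x,v) v^λ = 0 for all μ. Consequently, for any connection K with K⁰_λ = 0, a C² curve γ with γ⁰(t) = t satisfies the geodesic equation of K if and only if it satisfies the geodesic equation of K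 + σ; i.e. the two connections define the same non-relativistic dynamic equation. -/
/-! For every velocity `v`, on the affine subbundle or not, the spatial components of the soldering
form satisfy `Σ_λ σⁱ_λ(x, v) v^λ = (1 - v⁰) Σ_λ hⁱ_λ(x) v^λ`. The factor `1 - v⁰` vanishes on
non-relativistic velocities, so along a curve with `γ⁰(t) = t` the form `σ` contributes nothing to
the right-hand side of the geodesic equation. -/

open Matrix

section SolderingForm

variable {R : Type*} [Field R] {n : ℕ}

/-- The row `(σⁱ_λ(x, v))_λ` of the soldering form, as a function of `a = (hⁱ_λ(x))_λ`. -/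
def solderingRow (a v : Fin (n + 1) → R) : Fin (n + 1) → R :=
  vecCons (-(1 / 2) * (∑ k : Fin n, a k.succ * v k.succ) - a 0 * v 0 + a 0)
    fun k => a k.succ - 1 / 2 * a k.succ * v 0

/-- The soldering form `σ` built from the functions `hⁱ_λ`: `solderingForm h x v` is the matrix
`(σ^μ_λ(x, v))` with row index `μ`, so that `Σ_λ σ^μ_λ v^λ` is a matrix-vector product. -/
def solderingForm (h : (Fin (n + 1) → R) → Matrix (Fin n) (Fin (n + 1)) R)
    (x v : Fin (n + 1) → R) : Matrix (Fin (n + 1)) (Fin (n + 1)) R :=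
  of (vecCons 0 fun i => solderingRow (h x i) v)

theorem eq_solderingForm {h : (Fin (n + 1) → R) → Matrix (Fin n) (Fin (n + 1)) R}
    {σ : (Fin (n + 1) → R) → (Fin (n + 1) → R) → Matrix (Fin (n + 1)) (Fin (n + 1)) R}
    (hσ0 : ∀ x v l, σ x v 0 l = 0)
    (hσk : ∀ x v (i k : Fin n), σ x v i.succ k.succ
      = h x i k.succ - (1 / 2) * h x i k.succ * v 0)
    (hσt : ∀ x v (i : Fin n), σ x v i.succ 0
      = -(1 / 2) * (∑ k : Fin n, h x i k.succ * v k.succ) - h x i 0 * v 0 + h x i 0) :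
    σ = solderingForm h := by
  ext x v μ l
  cases μ using Fin.cases with
  | zero => exact hσ0 x v l
  | succ i =>
    cases l using Fin.cases with
    | zero => exact hσt x v i
    | succ k => exact hσk x v i k

variable [NeZero (2 : R)]

theorem solderingRow_dotProduct (a v : Fin (n + 1) → R) :
    solderingRow a v ⬝ᵥ v = (1 - v 0) * (a ⬝ᵥ v) := by
  have spatial_sum : ∑ k : Fin n, (a k.succ - 1 / 2 * a k.succ * v 0) * v k.succ
      = (1 - 1 / 2 * v 0) * ∑ k : Fin n, a k.succ * v k.succ := by
    rw [Finset.mul_sum]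
    exact Finset.sum_congr rfl fun k _ => by ring
  simp only [solderingRow, dotProduct, Fin.sum_univ_succ, cons_val_zero, cons_val_succ,
    spatial_sum]
  field_simp
  ring

theorem solderingForm_mulVec (h : (Fin (n + 1) → R) → Matrix (Fin n) (Fin (n + 1)) R)
    (x v : Fin (n + 1) → R) :
    solderingForm h x v *ᵥ v = (1 - v 0) • vecCons 0 (h x *ᵥ v) := by
  ext μ
  cases μ using Fin.cases with
  | zero => simp [solderingForm, mulVec]
  | succ i => exact solderingRow_dotProduct (h x i) v

theorem solderingForm_mulVec_eq_zero (h : (Fin (n + 1) → R) → Matrix (Fin n) (Fin (n + 1)) R)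
    (x : Fin (n + 1) → R) {v : Fin (n + 1) → R} (hv : v 0 = 1) :
    solderingForm h x v *ᵥ v = 0 := by
  rw [solderingForm_mulVec, hv, sub_self, zero_smul]

end SolderingForm

section GeodesicEquation

variable {𝕜 ι : Type*} [NontriviallyNormedField 𝕜] [Fintype ι]
  {K σ : (ι → 𝕜) → (ι → 𝕜) → Matrix ι ι 𝕜} {γ : 𝕜 → ι → 𝕜}

/-- The geodesic equation `γ̈ = K(γ, γ̇) γ̇` of the connection with component matrices
`K x v = (K^μ_λ(x, v))`. Regularity of `γ` is not part of the definition, so the equation is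
meaningful only for curves known to be twice differentiable. -/
def GeodesicEquation (K : (ι → 𝕜) → (ι → 𝕜) → Matrix ι ι 𝕜) (γ : 𝕜 → ι → 𝕜) : Prop :=
  ∀ t, deriv (deriv γ) t = K (γ t) (deriv γ t) *ᵥ deriv γ t

theorem geodesicEquation_add_iff (hσ : ∀ t, σ (γ t) (deriv γ t) *ᵥ deriv γ t = 0) :
    GeodesicEquation (K + σ) γ ↔ GeodesicEquation K γ := by
  simp only [GeodesicEquation, Pi.add_apply, add_mulVec, hσ, add_zero]

theorem geodesicEquation_iff_forall_apply (hγ : Differentiable 𝕜 γ)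
    (hγ' : Differentiable 𝕜 (deriv γ)) :
    GeodesicEquation K γ ↔ ∀ t μ, deriv (deriv fun s => γ s μ) t
      = ∑ l, K (γ t) (fun ν => deriv (fun s => γ s ν) t) μ l * deriv (fun s => γ s l) t := by
  have velocity (t : 𝕜) : deriv γ t = fun ν => deriv (fun s => γ s ν) t :=
    deriv_pi fun ν => differentiableAt_pi.1 (hγ t) ν
  have acceleration (t : 𝕜) : deriv (deriv γ) t = fun μ => deriv (deriv fun s => γ s μ) t := by
    rw [deriv_pi fun μ => differentiableAt_pi.1 (hγ' t) μ]
    simp only [velocity]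
  simp only [GeodesicEquation, acceleration, velocity, funext_iff]
  rfl

theorem geodesicEquation_add_solderingForm_iff [NeZero (2 : 𝕜)] {n : ℕ}
    (h : (Fin (n + 1) → 𝕜) → Matrix (Fin n) (Fin (n + 1)) 𝕜)
    {K : (Fin (n + 1) → 𝕜) → (Fin (n + 1) → 𝕜) → Matrix (Fin (n + 1)) (Fin (n + 1)) 𝕜}
    {γ : 𝕜 → Fin (n + 1) → 𝕜} (hγ : Differentiable 𝕜 γ) (hγ0 : ∀ t, γ t 0 = t) :
    GeodesicEquation (K + solderingForm h) γ ↔ GeodesicEquation K γ := by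
  have velocity_zero (t : 𝕜) : deriv γ t 0 = 1 := by
    rw [deriv_pi fun ν => differentiableAt_pi.1 (hγ t) ν]
    simp only [hγ0, deriv_id'']
  exact geodesicEquation_add_iff fun t => solderingForm_mulVec_eq_zero h (γ t) (velocity_zero t)

end GeodesicEquation

theorem soldering_form_ambiguity_of_dynamic_equation_general {𝕜 : Type*}
    [NontriviallyNormedField 𝕜] [NeZero (2 : 𝕜)] (n : ℕ)
    (h : (Fin (n + 1) → 𝕜) → Fin n → Fin (n + 1) → 𝕜)
    (σ : (Fin (n + 1) → 𝕜) → (Fin (n + 1) → 𝕜) → Fin (n + 1) → Fin (n + 1) → 𝕜)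
    (hσ0 : ∀ x v l, σ x v 0 l = 0)
    (hσk : ∀ x v (i k : Fin n), σ x v i.succ k.succ
      = h x i k.succ - (1 / 2) * h x i k.succ * v 0)
    (hσt : ∀ x v (i : Fin n), σ x v i.succ 0
      = -(1 / 2) * (∑ k : Fin n, h x i k.succ * v k.succ) - h x i 0 * v 0 + h x i 0) :
    (∀ x v : Fin (n + 1) → 𝕜, v 0 = 1 →
      ∀ mu : Fin (n + 1), (∑ l : Fin (n + 1), σ x v mu l * v l) = 0)
    ∧ ∀ K : (Fin (n + 1) → 𝕜) → (Fin (n + 1) → 𝕜) → Fin (n + 1) → Fin (n + 1) → 𝕜,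
        ∀ γ : 𝕜 → Fin (n + 1) → 𝕜, (∀ mu, ContDiff 𝕜 2 fun t => γ t mu) →
          (∀ t : 𝕜, γ t 0 = t) →
          ((∀ (t : 𝕜) (mu : Fin (n + 1)), deriv (deriv fun s => γ s mu) t
              = ∑ l : Fin (n + 1),
                  K (γ t) (fun nu => deriv (fun s => γ s nu) t) mu l
                    * deriv (fun s => γ s l) t)
            ↔ (∀ (t : 𝕜) (mu : Fin (n + 1)), deriv (deriv fun s => γ s mu) t
              = ∑ l : Fin (n + 1),
                  (K (γ t) (fun nu => deriv (fun s => γ s nu) t) mu l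
                    + σ (γ t) (fun nu => deriv (fun s => γ s nu) t) mu l)
                    * deriv (fun s => γ s l) t)) := by
  obtain rfl : σ = solderingForm h := eq_solderingForm hσ0 hσk hσt
  refine ⟨fun x v hv mu => congrFun (solderingForm_mulVec_eq_zero h x hv) mu, ?_⟩
  intro K γ hγ_comp hγ0
  have hγ : ContDiff 𝕜 2 γ := contDiff_pi.2 hγ_comp
  have differentiable : Differentiable 𝕜 γ := hγ.differentiable two_ne_zero
  have differentiable_deriv : Differentiable 𝕜 (deriv γ) := hγ.differentiable_deriv_two
  exact (geodesicEquation_iff_forall_apply differentiable differentiable_deriv).symm.trans <|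
    (geodesicEquation_add_solderingForm_iff h differentiable hγ0).symm.trans <|
      geodesicEquation_iff_forall_apply differentiable differentiable_deriv

/-- the soldering form `σ` with components `σ⁰_λ = 0`,
`σⁱₖ = hⁱₖ − ½hⁱₖ v⁰`, `σⁱ₀ = −½ hⁱₖ vᵏ − hⁱ₀ v⁰ + hⁱ₀` satisfies
`σ^μ_λ v^λ = 0` whenever `v⁰ = 1`; consequently, for any connection `K` with
vanishing temporal components, `K` and `K + σ` have the same geodesics among curves
with `γ⁰(t) = t`, i.e. they define the same non-relativistic dynamic equation. -/
theorem soldering_form_ambiguity_of_dynamic_equation (n : ℕ) (hn : 1 ≤ n)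
    (h : (Fin (n+1) → ℝ) → Fin n → Fin (n+1) → ℝ)
    (σ : (Fin (n+1) → ℝ) → (Fin (n+1) → ℝ) → Fin (n+1) → Fin (n+1) → ℝ)
    (hσ0 : ∀ x v l, σ x v 0 l = 0)
    (hσk : ∀ x v (i k : Fin n), σ x v i.succ k.succ
      = h x i k.succ - (1/2) * h x i k.succ * v 0)
    (hσt : ∀ x v (i : Fin n), σ x v i.succ 0
      = -(1/2) * (∑ k : Fin n, h x i k.succ * v k.succ) - h x i 0 * v 0 + h x i 0) :
    (∀ x v : Fin (n+1) → ℝ, v 0 = 1 →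
      ∀ mu : Fin (n+1), (∑ l : Fin (n+1), σ x v mu l * v l) = 0)
    ∧ ∀ K : (Fin (n+1) → ℝ) → (Fin (n+1) → ℝ) → Fin (n+1) → Fin (n+1) → ℝ,
        (∀ x v l, K x v 0 l = 0) →
        ∀ γ : ℝ → Fin (n+1) → ℝ, (∀ mu, ContDiff ℝ 2 fun t => γ t mu) →
          (∀ t : ℝ, γ t 0 = t) →
          ((∀ (t : ℝ) (mu : Fin (n+1)), deriv (deriv fun s => γ s mu) t
              = ∑ l : Fin (n+1),
                  K (γ t) (fun nu => deriv (fun s => γ s nu) t) mu l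
                    * deriv (fun s => γ s l) t)
            ↔ (∀ (t : ℝ) (mu : Fin (n+1)), deriv (deriv fun s => γ s mu) t
              = ∑ l : Fin (n+1),
                  (K (γ t) (fun nu => deriv (fun s => γ s nu) t) mu l
                    + σ (γ t) (fun nu => deriv (fun s => γ s nu) t) mu l)
                    * deriv (fun s => γ s l) t)) := by
  have general := soldering_form_ambiguity_of_dynamic_equation_general n h σ hσ0 hσk hσt
  exact ⟨general.1, fun K _ => general.2 K⟩
end

section
/- Let η denote the Minkowski form on ℝ⁴, η(u,w) = u⁰w⁰ − u¹w¹ − u²w² − u³w³. Let ξ : ℝ⁴ → ℝ⁴ be continuous and let c : ℝ → ℝ⁴ be a C² curve satisfying the relativistic equation c̈^μ(t) = ξ^μ(c(t)) − η(ξ(c(t)), ċ(t)) ċ^μ(t) for all t. If η(ċ(0), ċ(0)) = 1, then η(ċ(t), ċ(t)) = 1 for all t ∈ ℝ; i.e. solutions of this equation remain on the bundle of relativistic hyperboloids {v ∈ ℝ⁴ : η(v,v) = 1}. -/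
/-- The Minkowski form of signature `(+,−,−,−)` on `ℝ⁴`. -/
def minkowskiForm (u w : Fin 4 → ℝ) : ℝ :=
  u 0 * w 0 - u 1 * w 1 - u 2 * w 2 - u 3 * w 3

/-!
Let `φ = η(ċ, ċ) - 1` and `k = η(ξ(c), ċ)`. Pairing the equation of motion with `ċ` gives
`φ' = 2 η(c̈, ċ) = -2 k φ`. This is a homogeneous linear equation with continuous coefficient, so
`φ` vanishes identically once it vanishes at one time.
-/

section Module

variable {R M : Type*} [CommRing R] [AddCommGroup M] [Module R M]

/-- The relativization of a force `f` at the velocity `u`: the right-hand side of the relativistic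
equation of motion determined by the bilinear form `B`. -/
def relativization (B : LinearMap.BilinForm R M) (f u : M) : M :=
  f - B f u • u

theorem bilin_relativization_self (B : LinearMap.BilinForm R M) (f u : M) :
    B (relativization B f u) u = -B f u * (B u u - 1) := by
  simp only [relativization, map_sub, map_smul, LinearMap.sub_apply, LinearMap.smul_apply,
    smul_eq_mul]
  ring

end Module

section NormedSpace

variable {E : Type*} [NormedAddCommGroup E] [NormedSpace ℝ E]

theorem eq_exp_integral_smul_of_hasDerivAt {k : ℝ → ℝ} {y : ℝ → E} (hk : Continuous k)
    (hy : ∀ t, HasDerivAt y (k t • y t) t) (t₀ t : ℝ) :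
    y t = Real.exp (∫ s in t₀..t, k s) • y t₀ := by
  let K : ℝ → ℝ := fun t => ∫ s in t₀..t, k s
  have hK (t : ℝ) : HasDerivAt K (k t) t := (hk.integral_hasStrictDerivAt t₀ t).hasDerivAt
  have hderiv (t : ℝ) : HasDerivAt (fun s => Real.exp (-K s) • y s) 0 t := by
    refine ((hK t).neg.exp.smul (hy t)).congr_deriv ?_
    module
  have hconst : Real.exp (-K t) • y t = y t₀ := by
    simpa [K] using is_const_of_deriv_eq_zero (fun t => (hderiv t).differentiableAt)
      (fun t => (hderiv t).deriv) t t₀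
  rw [← hconst, smul_smul, ← Real.exp_add, add_neg_cancel, Real.exp_zero, one_smul]

theorem hasDerivAt_bilin_self {B : E →L[ℝ] E →L[ℝ] ℝ} (hB : B.toBilinForm.IsSymm)
    {v : ℝ → E} {v' : E} {t : ℝ} (hv : HasDerivAt v v' t) :
    HasDerivAt (fun s => B (v s) (v s)) (2 * B v' (v t)) t := by
  refine (B.hasDerivAt_of_bilinear (fun _ => hv) (fun _ => hv)).congr_deriv ?_
  have hsymm : B (v t) v' = B v' (v t) := hB.eq _ _
  rw [hsymm, two_mul]

/-- The equation of motion involves the position only through the values `f = ξ ∘ c` of the force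
along the worldline `c`, so it is stated as a first-order equation for the velocity `v`. -/
theorem relativization_preserves_hyperboloid_general {B : E →L[ℝ] E →L[ℝ] ℝ}
    (hB : B.toBilinForm.IsSymm) {f v : ℝ → E} (hf : Continuous f)
    (hv : ∀ t, HasDerivAt v (relativization B.toBilinForm (f t) (v t)) t) {t₀ : ℝ}
    (h₀ : B (v t₀) (v t₀) = 1) (t : ℝ) :
    B (v t) (v t) = 1 := by
  have hv_cont : Continuous v := continuous_iff_continuousAt.2 fun t => (hv t).continuousAt
  let k : ℝ → ℝ := fun t => -2 * B (f t) (v t)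
  have hk : Continuous k := by fun_prop
  have hdefect (t : ℝ) :
      HasDerivAt (fun s => B (v s) (v s) - 1) (k t • (B (v t) (v t) - 1)) t := by
    refine ((hasDerivAt_bilin_self hB (hv t)).sub_const 1).congr_deriv ?_
    have hpair := bilin_relativization_self B.toBilinForm (f t) (v t)
    simp only [ContinuousLinearMap.toBilinForm_apply] at hpair
    rw [hpair, smul_eq_mul]
    ring
  have hsolution := eq_exp_integral_smul_of_hasDerivAt hk hdefect t₀ t
  rwa [h₀, sub_self, smul_zero, sub_eq_zero] at hsolution

end NormedSpace

/-- `minkowskiForm` bundled as a continuous bilinear form, so that it can be differentiated along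
curves. -/
noncomputable def minkowskiCLM : (Fin 4 → ℝ) →L[ℝ] (Fin 4 → ℝ) →L[ℝ] ℝ :=
  (LinearMap.mk₂ ℝ minkowskiForm
    (fun _ _ _ => by simp only [minkowskiForm, Pi.add_apply]; ring)
    (fun _ _ _ => by simp only [minkowskiForm, Pi.smul_apply, smul_eq_mul]; ring)
    (fun _ _ _ => by simp only [minkowskiForm, Pi.add_apply]; ring)
    (fun _ _ _ => by simp only [minkowskiForm, Pi.smul_apply, smul_eq_mul]; ring)
  ).toContinuousBilinearMap

theorem minkowskiForm_comm (u w : Fin 4 → ℝ) : minkowskiForm u w = minkowskiForm w u := by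
  simp only [minkowskiForm, mul_comm]

theorem isSymm_minkowskiCLM : minkowskiCLM.toBilinForm.IsSymm := ⟨minkowskiForm_comm⟩

/-- solutions of the relativistic equation
`c̈^μ = ξ^μ − η(ξ, ċ) ċ^μ` with `η(ċ(0), ċ(0)) = 1` remain on the bundle of
relativistic hyperboloids `{v : η(v,v) = 1}` for all time. -/
theorem relativization_preserves_hyperboloid
    (ξ : (Fin 4 → ℝ) → Fin 4 → ℝ) (hξ : Continuous ξ)
    (c : ℝ → Fin 4 → ℝ) (hc : ∀ mu, ContDiff ℝ 2 fun t => c t mu)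
    (hgeo : ∀ (t : ℝ) (mu : Fin 4), deriv (deriv fun s => c s mu) t
      = ξ (c t) mu
        - minkowskiForm (ξ (c t)) (fun nu => deriv (fun s => c s nu) t)
          * deriv (fun s => c s mu) t)
    (hinit : minkowskiForm (fun nu => deriv (fun s => c s nu) 0)
      (fun nu => deriv (fun s => c s nu) 0) = 1) :
    ∀ t : ℝ, minkowskiForm (fun nu => deriv (fun s => c s nu) t)
      (fun nu => deriv (fun s => c s nu) t) = 1 := by
  have hforce : Continuous (ξ ∘ c) := hξ.comp (continuous_pi fun mu => (hc mu).continuous)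
  exact relativization_preserves_hyperboloid_general isSymm_minkowskiCLM hforce
    (fun t => hasDerivAt_pi.2 fun mu =>
      ((hc mu).differentiable_deriv_two t).hasDerivAt.congr_deriv (hgeo t mu)) hinit
end

section
/- Let g = (g_{μν}) be an invertible symmetric 4×4 real matrix with g₀ᵢ = 0 for i ∈ {1,2,3} and g₀₀ ≠ 0 (so g⁰⁰ = 1/g₀₀), and let bⁱ_μ (i ∈ {1,2,3}, μ ∈ {0,1,2,3}) be real numbers. Define σ⁰₀ = 0, σ⁰ₖ = −g⁰⁰ Σ_j g_{kj} bʲ₀ (k ∈ {1,2,3}), σⁱ₀ = bⁱ₀, and σⁱₖ = bⁱₖ. Then Σ_{μ,ν,λ} g_{μν} σ^μ_λ v^λ v^ν = 0 for all v ∈ ℝ⁴ if and only if Σ_i (g_{ik} bⁱⱼ + g_{ij} bⁱₖ) = 0 for all j, k ∈ {1,2,3}; i.e. the external force bⁱₖ ẋᵏ + bⁱ₀ admits a relativization as a soldering form satisfying the hyperboloid-preservation condition exactly when its velocity-dependent part is of Lorentz type (g-antisymmetric). -/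
/-!
Lowering an index turns the hyperboloid condition into the vanishing of the quadratic form of the
matrix `σᵀ * g`, i.e. (away from characteristic two) into skew-symmetry of that matrix. As
`g₀ᵢ = 0`, this decouples: the time-time entry vanishes because `σ⁰₀ = 0`, skew-symmetry of the
mixed entries is the equation `g₀₀ σ⁰ₖ = -gₖⱼ bʲ₀` that dictates the choice of `σ⁰ₖ`, and
skew-symmetry of the spatial block is the Lorentz-type condition.
-/

open Matrix

section SkewMatrix

variable {R ι : Type*} [CommRing R] [Fintype ι]

theorem dotProduct_mulVec_self_eq_zero_of_forall_add_apply_swap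
    [NoZeroDivisors R] [NeZero (2 : R)] {A : Matrix ι ι R} (hA : ∀ i j, A i j + A j i = 0)
    (v : ι → R) : v ⬝ᵥ A *ᵥ v = 0 := by
  have hskew : Aᵀ = -A := by
    ext i j
    exact eq_neg_of_add_eq_zero_left (hA j i)
  have hneg : v ⬝ᵥ A *ᵥ v = -(v ⬝ᵥ A *ᵥ v) := calc
    v ⬝ᵥ A *ᵥ v = v ⬝ᵥ Aᵀ *ᵥ v := (dotProduct_transpose_mulVec A v v).symm
    _ = -(v ⬝ᵥ A *ᵥ v) := by rw [hskew, neg_mulVec, dotProduct_neg]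
  have htwo : 2 * (v ⬝ᵥ A *ᵥ v) = 0 := by
    rw [two_mul]
    exact add_eq_zero_iff_eq_neg.mpr hneg
  exact (mul_eq_zero.mp htwo).resolve_left two_ne_zero

theorem add_apply_swap_eq_zero_of_forall_dotProduct_mulVec_self
    {A : Matrix ι ι R} (hA : ∀ v, v ⬝ᵥ A *ᵥ v = 0) (i j : ι) : A i j + A j i = 0 := by
  classical
  have hAlt : (toBilin' A).IsAlt := fun v => (toBilin'_apply' A v v).trans (hA v)
  have hneg : -A i j = A j i := by
    simpa only [toBilin'_single] using hAlt.neg_eq (Pi.single i 1) (Pi.single j 1)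
  exact neg_eq_iff_add_eq_zero.mp hneg

theorem forall_dotProduct_mulVec_self_eq_zero_iff
    [NoZeroDivisors R] [NeZero (2 : R)] {A : Matrix ι ι R} :
    (∀ v, v ⬝ᵥ A *ᵥ v = 0) ↔ ∀ i j, A i j + A j i = 0 :=
  ⟨add_apply_swap_eq_zero_of_forall_dotProduct_mulVec_self,
    dotProduct_mulVec_self_eq_zero_of_forall_add_apply_swap⟩

end SkewMatrix

theorem forall_add_apply_swap_eq_zero_iff_succ {M : Type*} [AddCommMonoid M] {n : ℕ}
    {A : Matrix (Fin (n + 1)) (Fin (n + 1)) M} (hA00 : A 0 0 = 0) :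
    (∀ i j, A i j + A j i = 0) ↔
      (∀ k : Fin n, A k.succ 0 + A 0 k.succ = 0) ∧
        ∀ j k : Fin n, A j.succ k.succ + A k.succ j.succ = 0 := by
  refine ⟨fun h => ⟨fun k => h k.succ 0, fun j k => h j.succ k.succ⟩, fun ⟨hmixed, hspace⟩ => ?_⟩
  refine Fin.cases (Fin.cases ?_ fun k => ?_) fun j => Fin.cases (hmixed j) (hspace j)
  · rw [hA00, add_zero]
  · rw [add_comm, hmixed]

section SolderingForm

variable {R ι : Type*} [CommSemiring R] [Fintype ι]

theorem sum_metric_mul_solderingForm_eq_dotProduct (g σ : Matrix ι ι R) (v : ι → R) :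
    ∑ μ, ∑ ν, ∑ l, g μ ν * σ μ l * v l * v ν = v ⬝ᵥ (σᵀ * g) *ᵥ v :=
  calc ∑ μ, ∑ ν, ∑ l, g μ ν * σ μ l * v l * v ν
      = ∑ μ, (∑ l, σ μ l * v l) * ∑ ν, g μ ν * v ν := by
        refine Finset.sum_congr rfl fun μ _ => ?_
        rw [Finset.sum_mul_sum, Finset.sum_comm]
        exact Finset.sum_congr rfl fun l _ => Finset.sum_congr rfl fun ν _ => by ring
    _ = (σ *ᵥ v) ⬝ᵥ (g *ᵥ v) := rfl
    _ = v ⬝ᵥ (σᵀ * g) *ᵥ v := by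
        rw [← mulVec_mulVec, dotProduct_mulVec v, vecMul_transpose]

variable {n : ℕ} {g : Matrix (Fin (n + 1)) (Fin (n + 1)) R}

theorem transpose_mul_apply_zero_of_apply_succ_zero (hgi0 : ∀ i : Fin n, g i.succ 0 = 0)
    (σ : Matrix (Fin (n + 1)) (Fin (n + 1)) R) (l : Fin (n + 1)) :
    (σᵀ * g) l 0 = g 0 0 * σ 0 l := by
  simp [mul_apply, Fin.sum_univ_succ, hgi0, mul_comm]

theorem transpose_mul_apply_succ_of_apply_zero_succ (hg0i : ∀ i : Fin n, g 0 i.succ = 0)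
    (σ : Matrix (Fin (n + 1)) (Fin (n + 1)) R) (l : Fin (n + 1)) (k : Fin n) :
    (σᵀ * g) l k.succ = ∑ i : Fin n, g i.succ k.succ * σ i.succ l := by
  simp [mul_apply, Fin.sum_univ_succ, hg0i, mul_comm]

end SolderingForm

theorem hyperboloid_condition_iff_mixed_and_spatial {R : Type*} [CommRing R] [NoZeroDivisors R]
    [NeZero (2 : R)] {n : ℕ} {g : Matrix (Fin (n + 1)) (Fin (n + 1)) R}
    (hg0i : ∀ i : Fin n, g 0 i.succ = 0) (hgi0 : ∀ i : Fin n, g i.succ 0 = 0)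
    {σ : Matrix (Fin (n + 1)) (Fin (n + 1)) R} (hσ00 : σ 0 0 = 0) :
    (∀ v : Fin (n + 1) → R, ∑ μ, ∑ ν, ∑ l, g μ ν * σ μ l * v l * v ν = 0) ↔
      (∀ k : Fin n, g 0 0 * σ 0 k.succ + ∑ i : Fin n, g i.succ k.succ * σ i.succ 0 = 0) ∧
        ∀ j k : Fin n,
          ∑ i : Fin n, (g i.succ k.succ * σ i.succ j.succ + g i.succ j.succ * σ i.succ k.succ)
            = 0 := by
  have htime : (σᵀ * g) 0 0 = 0 := by
    rw [transpose_mul_apply_zero_of_apply_succ_zero hgi0, hσ00, mul_zero]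
  simp only [sum_metric_mul_solderingForm_eq_dotProduct, forall_dotProduct_mulVec_self_eq_zero_iff,
    forall_add_apply_swap_eq_zero_iff_succ htime, transpose_mul_apply_zero_of_apply_succ_zero hgi0,
    transpose_mul_apply_succ_of_apply_zero_succ hg0i, Finset.sum_add_distrib]

theorem lorentz_type_force_iff_hyperboloid_condition_general
    {K : Type*} [Field K] [NeZero (2 : K)] {n : ℕ}
    (g : Matrix (Fin (n + 1)) (Fin (n + 1)) K)
    (hgsym : ∀ μ ν, g μ ν = g ν μ)
    (hg0i : ∀ i : Fin n, g 0 i.succ = 0)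
    (hg00 : g 0 0 ≠ 0)
    (b : Fin n → Fin (n + 1) → K)
    (σ : Fin (n + 1) → Fin (n + 1) → K)
    (hσ00 : σ 0 0 = 0)
    (hσ0k : ∀ k : Fin n, σ 0 k.succ = -(1 / g 0 0) * ∑ j : Fin n, g k.succ j.succ * b j 0)
    (hσi0 : ∀ i : Fin n, σ i.succ 0 = b i 0)
    (hσik : ∀ i k : Fin n, σ i.succ k.succ = b i k.succ) :
    (∀ v : Fin (n + 1) → K, ∑ μ, ∑ ν, ∑ l, g μ ν * σ μ l * v l * v ν = 0) ↔
      ∀ j k : Fin n,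
        ∑ i : Fin n, (g i.succ k.succ * b i j.succ + g i.succ j.succ * b i k.succ) = 0 := by
  have hgi0 (i : Fin n) : g i.succ 0 = 0 := (hgsym _ _).trans (hg0i i)
  have hmixed (k : Fin n) :
      g 0 0 * σ 0 k.succ + ∑ i : Fin n, g i.succ k.succ * σ i.succ 0 = 0 := by
    simp only [hσ0k, hσi0, hgsym _ k.succ]
    field_simp
    ring
  rw [hyperboloid_condition_iff_mixed_and_spatial hg0i hgi0 hσ00, and_iff_right hmixed]
  simp only [hσik]

/-- for a metric `g` with `g₀ᵢ = 0` and an external force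
`bⁱₖ ẋᵏ + bⁱ₀`, the soldering form `σ⁰₀ = 0`, `σ⁰ₖ = −g⁰⁰ gₖⱼ bʲ₀`, `σⁱ₀ = bⁱ₀`,
`σⁱₖ = bⁱₖ` satisfies `g_{μν} σ^μ_λ v^λ v^ν = 0` for all `v` iff
`g_{ik} bⁱⱼ + g_{ij} bⁱₖ = 0`, i.e. iff the velocity-dependent part of the force is
of Lorentz type (`g`-antisymmetric). -/
theorem lorentz_type_force_iff_hyperboloid_condition
    (g : Matrix (Fin 4) (Fin 4) ℝ)
    (hgsym : ∀ mu nu, g mu nu = g nu mu)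
    (hg0i : ∀ i : Fin 3, g 0 i.succ = 0)
    (hg00 : g 0 0 ≠ 0)
    (hginv : IsUnit g.det)
    (b : Fin 3 → Fin 4 → ℝ)
    (σ : Fin 4 → Fin 4 → ℝ)
    (hσ00 : σ 0 0 = 0)
    (hσ0k : ∀ k : Fin 3, σ 0 k.succ
      = -(1 / g 0 0) * ∑ j : Fin 3, g k.succ j.succ * b j 0)
    (hσi0 : ∀ i : Fin 3, σ i.succ 0 = b i 0)
    (hσik : ∀ i k : Fin 3, σ i.succ k.succ = b i k.succ) :
    (∀ v : Fin 4 → ℝ,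
      (∑ mu : Fin 4, ∑ nu : Fin 4, ∑ l : Fin 4, g mu nu * σ mu l * v l * v nu) = 0)
    ↔ (∀ j k : Fin 3,
        (∑ i : Fin 3, (g i.succ k.succ * b i j.succ + g i.succ j.succ * b i k.succ)) = 0) :=
  lorentz_type_force_iff_hyperboloid_condition_general g hgsym hg0i hg00 b σ hσ00 hσ0k hσi0 hσik
end

section
/- Let n ≥ 1, let mᵢⱼ, kᵢ, f : ℝ × ℝⁿ → ℝ be C¹ functions with (mᵢⱼ(t,x)) a symmetric invertible matrix for every (t,x), with inverse ((m⁻¹)^{ij}). Define on ℝ × ℝⁿ the symmetric matrix field g by g₀₀ = −2f, g₀ᵢ = −kᵢ, gᵢⱼ = −mᵢⱼ, and set {_λμν} = −½(∂_λ g_{μν} + ∂_ν g_{μλ} − ∂_μ g_{λν}) (indices λ, μ, ν ∈ {0,1,…,n}, where ∂₀ = ∂/∂t). Then a C² curve c : ℝ → ℝⁿ satisfies the Euler–Lagrange equations of the quadratic Lagrangian L(t,x,w) = ½ Σ mᵢⱼ(t,x) wⁱ wʲ + Σ kᵢ(t,x) wⁱ + f(t,x), namely d/dt [Σ_j mᵢⱼ(t,c(t))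 ċʲ(t) + kᵢ(t,c(t))] = ½ Σ_{j,l} ∂ᵢm_{jl}(t,c(t)) ċʲ ċˡ + Σ_j ∂ᵢkⱼ(t,c(t)) ċʲ + ∂ᵢf(t,c(t)) for all i and t, if and only if c̈ⁱ(t) = −Σ_{k,λ,ν} (m⁻¹)^{ik}(t,c(t)) {_λkν}(t,c(t)) u^λ u^ν for all i and t, where u = (1, ċ(t)) ∈ ℝ × ℝⁿ. -/
/-!
With `u = (1, ċ)`, the Lagrangian is `-½ g(u, u)`: the momentum `∂L/∂ẋⁱ` is `-g_{iν} u^ν` and the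
force `∂L/∂xⁱ` is `-½ ∂ᵢg_{λν} u^λ u^ν`. Differentiating the momentum along the curve produces the
mass term `m c̈` (since `u̇ = (0, c̈)`) and `-∂_λ g_{iν} u^λ u^ν`; symmetrized in `λ, ν`, the latter
differs from the force by exactly `{_λiν} u^λ u^ν`. So the Euler–Lagrange equations read
`m c̈ + {_λiν} u^λ u^ν = 0`, and it remains to invert the mass matrix.
-/

open Filter Matrix Topology

theorem mulVec_eq_iff_eq_mulVec_of_mul_eq_one {ι R : Type*} [Fintype ι] [DecidableEq ι]
    [CommRing R] {A B : Matrix ι ι R} (h : A * B = 1) {x y : ι → R} :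
    A *ᵥ x = y ↔ x = B *ᵥ y := by
  constructor
  · rintro rfl
    rw [mulVec_mulVec, mul_eq_one_comm.mp h, one_mulVec]
  · rintro rfl
    rw [mulVec_mulVec, h, one_mulVec]

section Christoffel

variable {𝕜 ι : Type*} [NontriviallyNormedField 𝕜] [Fintype ι] [DecidableEq ι]

/-- The partial derivative `∂ᵢh` at `x` of a function on coordinate space. -/
noncomputable def coordDeriv (i : ι) (h : (ι → 𝕜) → 𝕜) (x : ι → 𝕜) : 𝕜 :=
  fderiv 𝕜 h x (Pi.single i 1)

/-- The Christoffel symbol `{_λμν}` of `g` at `x`. The distinguished index is the middle one, and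
the sign is opposite to the usual one for symbols of the first kind. -/
noncomputable def christoffelSymbol (g : (ι → 𝕜) → ι → ι → 𝕜) (x : ι → 𝕜) (lam mu nu : ι) : 𝕜 :=
  -(1 / 2) * (coordDeriv lam (fun y => g y mu nu) x + coordDeriv nu (fun y => g y mu lam) x
    - coordDeriv mu (fun y => g y lam nu) x)

theorem hasDerivAt_comp_sum_coordDeriv {h : (ι → 𝕜) → 𝕜} {γ : 𝕜 → ι → 𝕜} {u : ι → 𝕜} {t : 𝕜}
    (hh : DifferentiableAt 𝕜 h (γ t)) (hγ : HasDerivAt γ u t) :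
    HasDerivAt (fun s => h (γ s)) (∑ lam, coordDeriv lam h (γ t) * u lam) t := by
  refine (hh.hasFDerivAt.comp_hasDerivAt t hγ).congr_deriv ?_
  conv_lhs => rw [← Finset.univ_sum_single u, map_sum]
  refine Finset.sum_congr rfl fun lam _ => ?_
  rw [coordDeriv, mul_comm, ← smul_eq_mul, ← map_smul, ← Pi.single_smul, smul_eq_mul, mul_one]

theorem hasDerivAt_sum_oneForm_mul {ω : (ι → 𝕜) → ι → 𝕜} {γ u : 𝕜 → ι → 𝕜} {a : ι → 𝕜} {t : 𝕜}
    (hω : ∀ nu, DifferentiableAt 𝕜 (fun x => ω x nu) (γ t))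
    (hγ : HasDerivAt γ (u t) t) (hu : HasDerivAt u a t) :
    HasDerivAt (fun s => ∑ nu, ω (γ s) nu * u s nu)
      (∑ lam, ∑ nu, coordDeriv lam (fun x => ω x nu) (γ t) * u t lam * u t nu
        + ∑ nu, ω (γ t) nu * a nu) t := by
  have hterm (nu : ι) :=
    (hasDerivAt_comp_sum_coordDeriv (hω nu) hγ).fun_mul (hasDerivAt_pi.mp hu nu)
  refine (HasDerivAt.fun_sum fun nu _ => hterm nu).congr_deriv ?_
  rw [Finset.sum_comm, ← Finset.sum_add_distrib]
  simp only [Finset.sum_mul]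

theorem sum_christoffelSymbol_mul_mul [NeZero (2 : 𝕜)] (g : (ι → 𝕜) → ι → ι → 𝕜) (x u : ι → 𝕜)
    (mu : ι) :
    ∑ lam, ∑ nu, christoffelSymbol g x lam mu nu * u lam * u nu
      = 1 / 2 * ∑ lam, ∑ nu, coordDeriv mu (fun y => g y lam nu) x * u lam * u nu
        - ∑ lam, ∑ nu, coordDeriv lam (fun y => g y mu nu) x * u lam * u nu := by
  have swap : ∑ lam, ∑ nu, coordDeriv nu (fun y => g y mu lam) x * u lam * u nu
      = ∑ lam, ∑ nu, coordDeriv lam (fun y => g y mu nu) x * u lam * u nu := by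
    rw [Finset.sum_comm]
    simp only [mul_right_comm]
  have two_ne : (2 : 𝕜) ≠ 0 := two_ne_zero
  calc
    _ = -(1 / 2) * (∑ lam, ∑ nu, coordDeriv lam (fun y => g y mu nu) x * u lam * u nu
          + ∑ lam, ∑ nu, coordDeriv nu (fun y => g y mu lam) x * u lam * u nu
          - ∑ lam, ∑ nu, coordDeriv mu (fun y => g y lam nu) x * u lam * u nu) := by
      simp only [christoffelSymbol, mul_assoc, add_mul, sub_mul, Finset.mul_sum,
        ← Finset.sum_add_distrib, ← Finset.sum_sub_distrib]
    _ = _ := by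
      rw [swap]
      field_simp
      ring

end Christoffel

/-- The array `G` on `{0, …, n}` extends the coefficients of the quadratic form
`½ Mᵢⱼ wⁱwʲ + Kᵢ wⁱ + F`: this is the relation of the metric `g` to `m`, `k`, `f` at a point.
It is stated for arrays rather than fields so that it also applies to their derivatives. -/
structure IsLagrangianExtension {R : Type*} [Ring R] {n : ℕ} (G : Fin (n + 1) → Fin (n + 1) → R)
    (M : Fin n → Fin n → R) (K : Fin n → R) (F : R) : Prop where
  zero_zero : G 0 0 = -(2 * F)
  zero_succ : ∀ i : Fin n, G 0 i.succ = -K i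
  succ_zero : ∀ i : Fin n, G i.succ 0 = -K i
  succ_succ : ∀ i j : Fin n, G i.succ j.succ = -M i j

namespace IsLagrangianExtension

section Algebra

variable {R : Type*} {n : ℕ} {M : Fin n → Fin n → R} {K : Fin n → R}
  {F : R} {G : Fin (n + 1) → Fin (n + 1) → R}

theorem sum_succ_mul_cons [CommRing R] (h : IsLagrangianExtension G M K F) (i : Fin n) (r : R)
    (w : Fin n → R) :
    ∑ nu, G i.succ nu * (Fin.cons r w : Fin (n + 1) → R) nu = -(∑ j, M i j * w j + K i * r) := by
  simp only [Fin.sum_univ_succ, Fin.cons_zero, Fin.cons_succ, h.succ_zero, h.succ_succ, neg_mul,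
    Finset.sum_neg_distrib]
  ring

theorem neg_half_mul_sum_cons_one [Field R] [NeZero (2 : R)] (h : IsLagrangianExtension G M K F)
    (w : Fin n → R) :
    -(1 / 2) * ∑ lam, ∑ nu, G lam nu * (Fin.cons 1 w : Fin (n + 1) → R) lam
        * (Fin.cons 1 w : Fin (n + 1) → R) nu
      = 1 / 2 * (∑ j, ∑ l, M j l * w j * w l) + ∑ j, K j * w j + F := by
  have two_ne : (2 : R) ≠ 0 := two_ne_zero
  simp only [Fin.sum_univ_succ, Fin.cons_zero, Fin.cons_succ, h.zero_zero, h.zero_succ,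
    h.succ_zero, h.succ_succ, neg_mul, mul_one, Finset.sum_neg_distrib, Finset.sum_add_distrib]
  field_simp
  ring

end Algebra

section Fields

variable {𝕜 : Type*} [NontriviallyNormedField 𝕜] {n : ℕ}
  {g : (Fin (n + 1) → 𝕜) → Fin (n + 1) → Fin (n + 1) → 𝕜}
  {m : (Fin (n + 1) → 𝕜) → Fin n → Fin n → 𝕜} {k : (Fin (n + 1) → 𝕜) → Fin n → 𝕜}
  {f : (Fin (n + 1) → 𝕜) → 𝕜} {x : Fin (n + 1) → 𝕜}

theorem differentiableAt_succ (h : ∀ x, IsLagrangianExtension (g x) (m x) (k x) (f x))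
    {i : Fin n} (hm : ∀ j, DifferentiableAt 𝕜 (fun x => m x i j) x)
    (hk : DifferentiableAt 𝕜 (fun x => k x i) x) (nu : Fin (n + 1)) :
    DifferentiableAt 𝕜 (fun x => g x i.succ nu) x := by
  cases nu using Fin.cases with
  | zero => simpa only [(h _).succ_zero] using hk.fun_neg
  | succ j => simpa only [(h _).succ_succ] using (hm j).fun_neg

theorem map_coordDeriv (h : ∀ x, IsLagrangianExtension (g x) (m x) (k x) (f x))
    (hf : DifferentiableAt 𝕜 f x) (mu : Fin (n + 1)) :
    IsLagrangianExtension (fun lam nu => coordDeriv mu (fun y => g y lam nu) x)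
      (fun i j => coordDeriv mu (fun y => m y i j) x) (fun i => coordDeriv mu (fun y => k y i) x)
      (coordDeriv mu f x) where
  zero_zero := by simp [coordDeriv, (h _).zero_zero, fderiv_const_mul hf]
  zero_succ i := by simp [coordDeriv, (h _).zero_succ]
  succ_zero i := by simp [coordDeriv, (h _).succ_zero]
  succ_succ i j := by simp [coordDeriv, (h _).succ_succ]

theorem hasDerivAt_momentum [NeZero (2 : 𝕜)]
    (h : ∀ x, IsLagrangianExtension (g x) (m x) (k x) (f x)) {c v : 𝕜 → Fin n → 𝕜}
    {a : Fin n → 𝕜} {t : 𝕜} {i : Fin n}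
    (hm : ∀ j, DifferentiableAt 𝕜 (fun x => m x i j) (Fin.cons t (c t)))
    (hk : DifferentiableAt 𝕜 (fun x => k x i) (Fin.cons t (c t)))
    (hf : DifferentiableAt 𝕜 f (Fin.cons t (c t)))
    (hc : HasDerivAt c (v t) t) (hv : HasDerivAt v a t) :
    HasDerivAt (fun s => ∑ j, m (Fin.cons s (c s)) i j * v s j + k (Fin.cons s (c s)) i)
      (1 / 2 * (∑ j, ∑ l,
          coordDeriv i.succ (fun x => m x j l) (Fin.cons t (c t)) * v t j * v t l)
        + ∑ j, coordDeriv i.succ (fun x => k x j) (Fin.cons t (c t)) * v t j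
        + coordDeriv i.succ f (Fin.cons t (c t))
        + (∑ j, m (Fin.cons t (c t)) i j * a j
          + ∑ lam, ∑ nu, christoffelSymbol g (Fin.cons t (c t)) lam i.succ nu
            * (Fin.cons 1 (v t) : Fin (n + 1) → 𝕜) lam
            * (Fin.cons 1 (v t) : Fin (n + 1) → 𝕜) nu)) t := by
  set γ : 𝕜 → Fin (n + 1) → 𝕜 := fun s => Fin.cons s (c s)
  set u : 𝕜 → Fin (n + 1) → 𝕜 := fun s => Fin.cons 1 (v s)
  have hγ : HasDerivAt γ (u t) t := (hasDerivAt_id' t).finCons hc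
  have hu : HasDerivAt u (Fin.cons 0 a) t := (hasDerivAt_const t 1).finCons hv
  have momentum (s : 𝕜) :
      ∑ j, m (γ s) i j * v s j + k (γ s) i = -∑ nu, g (γ s) i.succ nu * u s nu := by
    rw [(h _).sum_succ_mul_cons, neg_neg, mul_one]
  have force := (map_coordDeriv h hf i.succ).neg_half_mul_sum_cons_one (v t)
  have mass := (h (γ t)).sum_succ_mul_cons i 0 a
  have hmomentum := (hasDerivAt_sum_oneForm_mul (differentiableAt_succ h hm hk) hγ hu).fun_neg
  simp only [← momentum] at hmomentum
  refine hmomentum.congr_deriv ?_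
  rw [← force, mass, sum_christoffelSymbol_mul_mul]
  ring

end Fields

end IsLagrangianExtension

theorem lagrange_equation_iff_christoffel_form_general {𝕜 : Type*} [NontriviallyNormedField 𝕜]
    [NeZero (2 : 𝕜)] {n : ℕ}
    {g : (Fin (n + 1) → 𝕜) → Fin (n + 1) → Fin (n + 1) → 𝕜}
    {m : (Fin (n + 1) → 𝕜) → Fin n → Fin n → 𝕜} {k : (Fin (n + 1) → 𝕜) → Fin n → 𝕜}
    {f : (Fin (n + 1) → 𝕜) → 𝕜} (h : ∀ x, IsLagrangianExtension (g x) (m x) (k x) (f x))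
    {c v : 𝕜 → Fin n → 𝕜} {a : Fin n → 𝕜} {t : 𝕜} {minv : Fin n → Fin n → 𝕜}
    (hm : ∀ i j, DifferentiableAt 𝕜 (fun x => m x i j) (Fin.cons t (c t)))
    (hk : ∀ i, DifferentiableAt 𝕜 (fun x => k x i) (Fin.cons t (c t)))
    (hf : DifferentiableAt 𝕜 f (Fin.cons t (c t)))
    (hminv : ∀ i j, ∑ l, m (Fin.cons t (c t)) i l * minv l j = if i = j then 1 else 0)
    (hc : ∀ᶠ s in 𝓝 t, HasDerivAt c (v s) s) (hv : HasDerivAt v a t) :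
    (∀ i, deriv (fun s => ∑ j, m (Fin.cons s (c s)) i j * v s j + k (Fin.cons s (c s)) i) t
        = 1 / 2 * (∑ j, ∑ l,
            coordDeriv i.succ (fun x => m x j l) (Fin.cons t (c t)) * v t j * v t l)
          + ∑ j, coordDeriv i.succ (fun x => k x j) (Fin.cons t (c t)) * v t j
          + coordDeriv i.succ f (Fin.cons t (c t)))
      ↔ ∀ i, a i = -∑ k', ∑ lam, ∑ nu,
          minv i k' * christoffelSymbol g (Fin.cons t (c t)) lam k'.succ nu
            * (Fin.cons 1 (v t) : Fin (n + 1) → 𝕜) lam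
            * (Fin.cons 1 (v t) : Fin (n + 1) → 𝕜) nu := by
  set Γ : Fin n → 𝕜 := fun i => ∑ lam, ∑ nu,
    christoffelSymbol g (Fin.cons t (c t)) lam i.succ nu
      * (Fin.cons 1 (v t) : Fin (n + 1) → 𝕜) lam * (Fin.cons 1 (v t) : Fin (n + 1) → 𝕜) nu
    with hΓ
  have inverse : of (m (Fin.cons t (c t))) * of minv = 1 := by
    ext i j
    simpa only [mul_apply, of_apply, one_apply] using hminv i j
  calc
    _ ↔ of (m (Fin.cons t (c t))) *ᵥ a = -Γ := by
      rw [funext_iff]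
      refine forall_congr' fun i => ?_
      rw [(IsLagrangianExtension.hasDerivAt_momentum h (hm i) (hk i) hf hc.self_of_nhds hv).deriv,
        add_eq_left]
      exact add_eq_zero_iff_eq_neg
    _ ↔ a = of minv *ᵥ -Γ := mulVec_eq_iff_eq_mulVec_of_mul_eq_one inverse
    _ ↔ _ := by
      simp only [mulVec_neg, funext_iff, Pi.neg_apply, mulVec, dotProduct, of_apply, hΓ,
        Finset.mul_sum, mul_assoc]

/-- the Euler–Lagrange equation of a non-degenerate quadratic Lagrangian
`L = ½ mᵢⱼ ẋⁱẋʲ + kᵢ ẋⁱ + f` on `ℝ × ℝⁿ → ℝ` is equivalent to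
`ẍⁱ = −(m⁻¹)^{ik} {_λkν} ẋ^λ ẋ^ν` (with `ẋ⁰ = 1`), where `{_λμν}` are the Christoffel
symbols of the metric `g₀₀ = −2f`, `g₀ᵢ = −kᵢ`, `gᵢⱼ = −mᵢⱼ` extending the Lagrangian. -/
theorem lagrange_equation_iff_christoffel_form (n : ℕ) (hn : 1 ≤ n)
    (m : (Fin (n+1) → ℝ) → Fin n → Fin n → ℝ)
    (k : (Fin (n+1) → ℝ) → Fin n → ℝ)
    (f : (Fin (n+1) → ℝ) → ℝ)
    (minv : (Fin (n+1) → ℝ) → Fin n → Fin n → ℝ)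
    (hm : ∀ i j, ContDiff ℝ 1 fun x => m x i j)
    (hk : ∀ i, ContDiff ℝ 1 fun x => k x i)
    (hf : ContDiff ℝ 1 f)
    (hmsym : ∀ x i j, m x i j = m x j i)
    (hminv : ∀ x i j, ∑ l : Fin n, m x i l * minv x l j = if i = j then 1 else 0)
    -- the metric g extending the Lagrangian
    (g : (Fin (n+1) → ℝ) → Fin (n+1) → Fin (n+1) → ℝ)
    (hg00 : ∀ x, g x 0 0 = -(2 * f x))
    (hg0i : ∀ x (i : Fin n), g x 0 i.succ = -k x i)
    (hgi0 : ∀ x (i : Fin n), g x i.succ 0 = -k x i)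
    (hgij : ∀ x (i j : Fin n), g x i.succ j.succ = -m x i j)
    (c : ℝ → Fin n → ℝ)
    (hc : ∀ i, ContDiff ℝ 2 fun t => c t i) :
    -- the Euler--Lagrange equations ...
    (∀ (i : Fin n) (t : ℝ),
      deriv (fun s =>
          (∑ j : Fin n, m (Fin.cons s (c s)) i j * deriv (fun r => c r j) s)
            + k (Fin.cons s (c s)) i) t
        = (1/2) * (∑ j : Fin n, ∑ l : Fin n,
              fderiv ℝ (fun x => m x j l) (Fin.cons t (c t)) (Pi.single i.succ 1)
                * deriv (fun r => c r j) t * deriv (fun r => c r l) t)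
          + (∑ j : Fin n,
              fderiv ℝ (fun x => k x j) (Fin.cons t (c t)) (Pi.single i.succ 1)
                * deriv (fun r => c r j) t)
          + fderiv ℝ f (Fin.cons t (c t)) (Pi.single i.succ 1))
    -- ... hold iff the dynamic equation in Christoffel form holds
    ↔ (∀ (i : Fin n) (t : ℝ),
        deriv (deriv fun s => c s i) t
          = -∑ k' : Fin n, ∑ lam : Fin (n+1), ∑ nu : Fin (n+1),
              minv (Fin.cons t (c t)) i k'
                * (-(1/2) *
                    (fderiv ℝ (fun x => g x k'.succ nu) (Fin.cons t (c t)) (Pi.single lam 1)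
                      + fderiv ℝ (fun x => g x k'.succ lam) (Fin.cons t (c t)) (Pi.single nu 1)
                      - fderiv ℝ (fun x => g x lam nu) (Fin.cons t (c t)) (Pi.single k'.succ 1)))
                * (Fin.cons 1 (fun j => deriv (fun r => c r j) t) : Fin (n+1) → ℝ) lam
                * (Fin.cons 1 (fun j => deriv (fun r => c r j) t) : Fin (n+1) → ℝ) nu) := by
  rw [forall_comm, forall_comm (α := Fin n)]
  refine forall_congr' fun t => lagrange_equation_iff_christoffel_form_general
    (fun x => ⟨hg00 x, hg0i x, hgi0 x, hgij x⟩)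
    (fun i j => (hm i j).differentiable one_ne_zero _)
    (fun i => (hk i).differentiable one_ne_zero _) (hf.differentiable one_ne_zero _) (hminv _)
    (.of_forall fun s => hasDerivAt_pi.2 fun j => ((hc j).differentiable two_ne_zero s).hasDerivAt)
    (hasDerivAt_pi.2 fun j => ((hc j).differentiable_deriv_two t).hasDerivAt)
end
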